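/- Let δ' ≥ 0 and let A ∈ ℝ^{n×n} be a symmetric matrix with all entries positive whose largest eigenvalue equals 1 and such that A_{sj}/A_{tj} ≤ 1+δ' for all indices s, t, j. List the eigenvalues of A in decreasing order λ₁ ≥ λ₂ ≥ … ≥ λₙ. Then for every p with 2 ≤ p ≤ n, Σ_{i=2}^{p} |λᵢ| ≤ sqrt(p−1) · sqrt( (1 + (n−1)(1+δ')²)(1+δ')² / n − 1 ). -/

import Mathlib

open Matrix Finset

/-!
The Rayleigh quotient of `A` at the all-ones vector is at most `λ₁`, so the entries of `A` sum to
at most `n λ₁`. By symmetry, comparability within columns by a factor `r = 1 + δ'` gives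
comparability of any two entries by a factor `r ^ 2`, whence `n² ∑ A i j ^ 2 ≤ r² (∑ A i j)²` and
`∑ λᵢ² = ∑ A i j ^ 2 ≤ r² λ₁²`. Removing `λ₁²` and applying Cauchy–Schwarz bounds `∑ |λᵢ|`, even
with the constant `r ^ 2 - 1`, which is at most the constant of the theorem.
-/

section EntryComparison

variable {ι R : Type*} [CommSemiring R] [PartialOrder R] [IsOrderedRing R]

lemma card_mul_sum_sq_le_mul_sq_sum {s : Finset ι} {f : ι → R} {K : R}
    (hf : ∀ i ∈ s, 0 ≤ f i) (hK : ∀ i ∈ s, ∀ j ∈ s, f i ≤ K * f j) :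
    #s * ∑ i ∈ s, f i ^ 2 ≤ K * (∑ i ∈ s, f i) ^ 2 :=
  calc #s * ∑ i ∈ s, f i ^ 2
      = ∑ i ∈ s, ∑ _j ∈ s, f i * f i := by simp only [sum_const, nsmul_eq_mul, mul_sum, sq]
    _ ≤ ∑ i ∈ s, ∑ j ∈ s, K * f j * f i :=
        sum_le_sum fun i hi => sum_le_sum fun j hj =>
          mul_le_mul_of_nonneg_right (hK i hi j hj) (hf i hi)
    _ = K * (∑ i ∈ s, f i) ^ 2 := by
        simp only [← sum_mul, ← mul_sum, sq, mul_assoc]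

variable {A : Matrix ι ι R} {r : R}

lemma apply_le_sq_mul_apply_of_isSymm (hA : A.IsSymm) (hr : 0 ≤ r)
    (hcol : ∀ i k j, A i j ≤ r * A k j) (i j k l : ι) : A i j ≤ r ^ 2 * A k l :=
  calc A i j ≤ r * A l j := hcol i l j
    _ = r * A j l := by rw [hA.apply]
    _ ≤ r * (r * A k l) := mul_le_mul_of_nonneg_left (hcol j k l) hr
    _ = r ^ 2 * A k l := by ring

lemma card_sq_mul_sum_sum_sq_le_of_isSymm [Fintype ι] (hA : A.IsSymm) (hr : 0 ≤ r)
    (hnonneg : ∀ i j, 0 ≤ A i j) (hcol : ∀ i k j, A i j ≤ r * A k j) :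
    (Fintype.card ι : R) ^ 2 * ∑ i, ∑ j, A i j ^ 2 ≤ r ^ 2 * (∑ i, ∑ j, A i j) ^ 2 := by
  have h := card_mul_sum_sq_le_mul_sq_sum (s := (univ : Finset (ι × ι))) (f := fun x => A x.1 x.2)
    (fun x _ => hnonneg x.1 x.2)
    fun x _ y _ => apply_le_sq_mul_apply_of_isSymm hA hr hcol x.1 x.2 y.1 y.2
  simpa only [Fintype.sum_prod_type, card_univ, Fintype.card_prod, ← sq, Nat.cast_pow] using h

end EntryComparison

section SpectralDecomposition

variable {m n R : Type*} [Fintype n] [DecidableEq n]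

lemma isSymm_mul_diagonal_mul_transpose [CommSemiring R] (U : Matrix m n R) (μ : n → R) :
    (U * diagonal μ * Uᵀ).IsSymm := by
  simp only [IsSymm, transpose_mul, transpose_transpose, diagonal_transpose, Matrix.mul_assoc]

variable [Fintype m]

lemma dotProduct_mul_diagonal_mul_transpose_mulVec [CommSemiring R] (U : Matrix m n R)
    (μ : n → R) (x : m → R) :
    x ⬝ᵥ (U * diagonal μ * Uᵀ) *ᵥ x = ∑ k, μ k * (Uᵀ *ᵥ x) k ^ 2 := by
  rw [← mulVec_mulVec, ← mulVec_mulVec, dotProduct_mulVec, ← mulVec_transpose]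
  refine sum_congr rfl fun k _ => ?_
  rw [mulVec_diagonal]
  ring

lemma sum_sum_sq_mul_diagonal_mul_transpose [CommSemiring R] {U : Matrix m n R}
    (hU : Uᵀ * U = 1) (μ : n → R) :
    ∑ i, ∑ j, (U * diagonal μ * Uᵀ) i j ^ 2 = ∑ k, μ k ^ 2 := by
  set A := U * diagonal μ * Uᵀ with hA
  calc ∑ i, ∑ j, A i j ^ 2
      = trace (A * Aᵀ) := by simp only [trace, diag_apply, mul_apply, transpose_apply, sq]
    _ = trace (U * (diagonal μ * (Uᵀ * U) * diagonal μ * Uᵀ)) := by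
        rw [(isSymm_mul_diagonal_mul_transpose U μ).eq, hA]
        simp only [Matrix.mul_assoc]
    _ = trace (diagonal μ * diagonal μ) := by
        rw [trace_mul_comm, Matrix.mul_assoc, hU, Matrix.mul_one, Matrix.mul_one]
    _ = ∑ k, μ k ^ 2 := by simp only [diagonal_mul_diagonal, trace_diagonal, sq]

variable [CommRing R] [LinearOrder R] [IsStrictOrderedRing R] {μ : n → R}

lemma dotProduct_mul_diagonal_mul_transpose_mulVec_le [DecidableEq m] {U : Matrix m n R}
    (hU : U * Uᵀ = 1) {c : R} (hμ : ∀ k, μ k ≤ c) (x : m → R) :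
    x ⬝ᵥ (U * diagonal μ * Uᵀ) *ᵥ x ≤ c * (x ⬝ᵥ x) :=
  calc x ⬝ᵥ (U * diagonal μ * Uᵀ) *ᵥ x
      = ∑ k, μ k * (Uᵀ *ᵥ x) k ^ 2 := dotProduct_mul_diagonal_mul_transpose_mulVec U μ x
    _ ≤ ∑ k, c * (Uᵀ *ᵥ x) k ^ 2 :=
        sum_le_sum fun k _ => mul_le_mul_of_nonneg_right (hμ k) (sq_nonneg _)
    _ = x ⬝ᵥ (U * diagonal (fun _ => c) * Uᵀ) *ᵥ x :=
        (dotProduct_mul_diagonal_mul_transpose_mulVec U (fun _ => c) x).symm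
    _ = c * (x ⬝ᵥ x) := by
        rw [← smul_one_eq_diagonal, Matrix.mul_smul, Matrix.mul_one, Matrix.smul_mul, hU,
          smul_mulVec, one_mulVec, dotProduct_smul, smul_eq_mul]

lemma sum_sum_mul_diagonal_mul_transpose_le [DecidableEq m] {U : Matrix m n R}
    (hU : U * Uᵀ = 1) {c : R} (hμ : ∀ k, μ k ≤ c) :
    ∑ i, ∑ j, (U * diagonal μ * Uᵀ) i j ≤ c * Fintype.card m := by
  have h := dotProduct_mul_diagonal_mul_transpose_mulVec_le hU hμ 1
  rw [one_dotProduct_one] at h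
  simpa only [one_dotProduct, mulVec, dotProduct_one] using h

end SpectralDecomposition

lemma sum_abs_le_sqrt_card_mul_sqrt_sum_sq {ι : Type*} (s : Finset ι) (f : ι → ℝ) :
    ∑ i ∈ s, |f i| ≤ √(#s) * √(∑ i ∈ s, f i ^ 2) := by
  simpa using Real.sum_mul_le_sqrt_mul_sqrt s (fun _ => 1) fun i => |f i|

section NonleadingEigenvalues

variable {ι R : Type*} [Fintype ι] [DecidableEq ι]
  [CommRing R] [LinearOrder R] [IsStrictOrderedRing R]

lemma leading_eigenvalue_nonneg {A U : Matrix ι ι R} {μ : ι → R} {i₀ : ι}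
    (hnonneg : ∀ i j, 0 ≤ A i j) (hU : U * Uᵀ = 1) (hdecomp : A = U * diagonal μ * Uᵀ)
    (hmax : ∀ i, μ i ≤ μ i₀) : 0 ≤ μ i₀ := by
  have : Nonempty ι := ⟨i₀⟩
  subst hdecomp
  have hsum : 0 ≤ μ i₀ * Fintype.card ι :=
    (sum_nonneg fun i _ => sum_nonneg fun j _ => hnonneg i j).trans
      (sum_sum_mul_diagonal_mul_transpose_le hU hmax)
  exact nonneg_of_mul_nonneg_left hsum (Nat.cast_pos.2 Fintype.card_pos)

lemma sum_sq_eigenvalues_le {A U : Matrix ι ι R} {μ : ι → R} {r : R} {i₀ : ι} (hr : 0 ≤ r)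
    (hnonneg : ∀ i j, 0 ≤ A i j) (hcol : ∀ i k j, A i j ≤ r * A k j)
    (hU : U * Uᵀ = 1) (hdecomp : A = U * diagonal μ * Uᵀ) (hmax : ∀ i, μ i ≤ μ i₀) :
    ∑ i, μ i ^ 2 ≤ r ^ 2 * μ i₀ ^ 2 := by
  have : Nonempty ι := ⟨i₀⟩
  subst hdecomp
  have hentries := card_sq_mul_sum_sum_sq_le_of_isSymm (isSymm_mul_diagonal_mul_transpose U μ) hr
    hnonneg hcol
  rw [sum_sum_sq_mul_diagonal_mul_transpose (mul_eq_one_comm.mp hU)] at hentries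
  have hsum_nonneg : 0 ≤ ∑ i, ∑ j, (U * diagonal μ * Uᵀ) i j :=
    sum_nonneg fun i _ => sum_nonneg fun j _ => hnonneg i j
  have hsum_le := sum_sum_mul_diagonal_mul_transpose_le hU hmax
  have hcard : 0 < (Fintype.card ι : R) ^ 2 := pow_pos (Nat.cast_pos.2 Fintype.card_pos) 2
  refine le_of_mul_le_mul_left ?_ hcard
  calc (Fintype.card ι : R) ^ 2 * ∑ i, μ i ^ 2
      ≤ r ^ 2 * (∑ i, ∑ j, (U * diagonal μ * Uᵀ) i j) ^ 2 := hentries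
    _ ≤ r ^ 2 * (μ i₀ * Fintype.card ι) ^ 2 := by gcongr
    _ = (Fintype.card ι : R) ^ 2 * (r ^ 2 * μ i₀ ^ 2) := by ring

theorem sum_nonleading_eigenvalues_bound_general {A U : Matrix ι ι ℝ} {μ : ι → ℝ} {r : ℝ} {i₀ : ι}
    {s : Finset ι} (hr : 0 ≤ r) (hnonneg : ∀ i j, 0 ≤ A i j)
    (hcol : ∀ i k j, A i j ≤ r * A k j) (hU : U * Uᵀ = 1) (hdecomp : A = U * diagonal μ * Uᵀ)
    (hmax : ∀ i, μ i ≤ μ i₀) (hs : i₀ ∉ s) :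
    ∑ i ∈ s, |μ i| ≤ √(#s) * √(r ^ 2 - 1) * μ i₀ := by
  have hsq : ∑ i ∈ s, μ i ^ 2 ≤ (r ^ 2 - 1) * μ i₀ ^ 2 := by
    have hinsert : ∑ i ∈ insert i₀ s, μ i ^ 2 ≤ ∑ i, μ i ^ 2 :=
      sum_le_univ_sum_of_nonneg fun i => sq_nonneg (μ i)
    rw [sum_insert hs] at hinsert
    linarith [sum_sq_eigenvalues_le hr hnonneg hcol hU hdecomp hmax]
  calc ∑ i ∈ s, |μ i| ≤ √(#s) * √(∑ i ∈ s, μ i ^ 2) := sum_abs_le_sqrt_card_mul_sqrt_sum_sq s μ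
    _ ≤ √(#s) * √((r ^ 2 - 1) * μ i₀ ^ 2) := by gcongr
    _ = √(#s) * √(r ^ 2 - 1) * μ i₀ := by
        rw [Real.sqrt_mul' _ (sq_nonneg _),
          Real.sqrt_sq (leading_eigenvalue_nonneg hnonneg hU hdecomp hmax), mul_assoc]

end NonleadingEigenvalues

lemma card_filter_val_mem_Ico_le (n a b : ℕ) :
    #{i : Fin n | a ≤ (i : ℕ) ∧ (i : ℕ) < b} ≤ b - a := by
  rw [← Nat.card_Ico]
  exact card_le_card_of_injOn Fin.val (fun i hi => by simpa using hi) Fin.val_injective.injOn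

lemma le_one_add_sub_one_mul_mul_div {K : Type*} [Field K] [LinearOrder K]
    [IsStrictOrderedRing K] {n x : K} (hn : 1 ≤ n) (hx : 1 ≤ x) :
    x ≤ (1 + (n - 1) * x) * x / n := by
  rw [le_div_iff₀ (zero_lt_one.trans_le hn), mul_comm x n]
  refine mul_le_mul_of_nonneg_right ?_ (zero_le_one.trans hx)
  linarith [le_mul_of_one_le_right (sub_nonneg.2 hn) hx]

/-- exact form of the paper's Corollary A.6.  Let `A` be a symmetric
matrix with all entries positive, largest eigenvalue equal to `1`, and same-column entry
ratios at most `1 + δ'`.  Listing the eigenvalues of `A` in decreasing order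
`λ₁ ≥ λ₂ ≥ … ≥ λₙ` (via a spectral decomposition), for every `2 ≤ p ≤ n` the sum of
the absolute values of the eigenvalues `λ₂, …, λ_p` is at most
`sqrt(p−1) · sqrt((1 + (n-1)(1+δ')²)(1+δ')²/n − 1)`.
(The eigenvalue `λᵢ` in 1-based indexing is `μ` at the 0-based index `i - 1`.) -/
theorem sum_nonleading_eigenvalues_bound {n : ℕ} (hn : 0 < n) (δ' : ℝ) (hδ' : 0 ≤ δ')
    (A : Matrix (Fin n) (Fin n) ℝ)
    (hsym : A.IsSymm)
    (hpos : ∀ i j, 0 < A i j)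
    (hratio : ∀ s t j, A s j / A t j ≤ 1 + δ')
    (μ : Fin n → ℝ) (hmono : Antitone μ)
    (U : Matrix (Fin n) (Fin n) ℝ) (hU : U * Uᵀ = 1)
    (hdecomp : A = U * Matrix.diagonal μ * Uᵀ)
    (htop : μ ⟨0, hn⟩ = 1) :
    ∀ p : ℕ, 2 ≤ p → p ≤ n →
      ∑ i ∈ Finset.univ.filter (fun i : Fin n => 1 ≤ (i : ℕ) ∧ (i : ℕ) < p), |μ i| ≤
        Real.sqrt ((p : ℝ) - 1) *
          Real.sqrt ((1 + ((n : ℝ) - 1) * (1 + δ') ^ 2) * (1 + δ') ^ 2 / n - 1) := by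
  intro p hp _
  have hcol (s t j) : A s j ≤ (1 + δ') * A t j := (div_le_iff₀ (hpos t j)).mp (hratio s t j)
  have hmax (i) : μ i ≤ μ ⟨0, hn⟩ := hmono (Fin.mk_le_of_le_val (Nat.zero_le i))
  set s : Finset (Fin n) := {i | 1 ≤ (i : ℕ) ∧ (i : ℕ) < p} with hs
  have hcard : (#s : ℝ) ≤ p - 1 := by
    rw [← Nat.cast_pred (by lia)]
    exact_mod_cast card_filter_val_mem_Ico_le n 1 p
  calc ∑ i ∈ s, |μ i| ≤ √(#s) * √((1 + δ') ^ 2 - 1) * μ ⟨0, hn⟩ :=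
        sum_nonleading_eigenvalues_bound_general (by positivity) (fun i j => (hpos i j).le) hcol
          hU hdecomp hmax (by simp [hs])
    _ = √(#s) * √((1 + δ') ^ 2 - 1) := by rw [htop, mul_one]
    _ ≤ √(p - 1) * √((1 + (n - 1) * (1 + δ') ^ 2) * (1 + δ') ^ 2 / n - 1) := by
        gcongr
        exact le_one_add_sub_one_mul_mul_div (by exact_mod_cast hn)
          (one_le_pow₀ (le_add_of_nonneg_right hδ'))
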